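/- arXiv:1510.08175 — 2 statements merged into one kernel-verified Lean document; each statement's English description precedes it below -/
import Mathlib

section
/- (Theorem 3, Ai–Zhang) Suppose eTRS satisfies the Slater condition. Then strong duality fails for eTRS (i.e., p* ≠ d*) if and only if there exist multipliers λ > 0 and μ > 0 such that: (1) H(λ) := A + λI is positive semidefinite with rank(H(λ)) = n − 1, and (2) the linear system H(λ)x = a − (μ/2)b has two solutions x1 and x2 satisfying ‖x1‖² = Δ, ‖x2‖² = Δ, and (bᵀx1 − c)(bᵀx2 − c) < 0. -/
open Matrix

/-- The smallest eigenvalue of a real (symmetric) matrix. -/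
noncomputable def lambdaMin {ι : Type} [Fintype ι] (M : Matrix ι ι ℝ) : ℝ :=
  sInf {μ : ℝ | ∃ v : ι → ℝ, v ≠ 0 ∧ M.mulVec v = μ • v}

/-- The multiplicity of the smallest eigenvalue: the dimension of Null(M - λmin(M)·I). -/
noncomputable def eigMult {ι : Type} [Fintype ι] [DecidableEq ι] (M : Matrix ι ι ℝ) : ℕ :=
  Module.finrank ℝ (LinearMap.ker (M - lambdaMin M • (1 : Matrix ι ι ℝ)).mulVecLin)

/-- The bordered matrix D(t) = [[t, -aᵀ],[-a, A]]. -/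
noncomputable def borderD {n : ℕ} (A : Matrix (Fin n) (Fin n) ℝ) (a : Fin n → ℝ) (t : ℝ) :
    Matrix (Unit ⊕ Fin n) (Unit ⊕ Fin n) ℝ :=
  Matrix.fromBlocks (Matrix.of fun (_ : Unit) (_ : Unit) => t)
    (Matrix.of fun (_ : Unit) (j : Fin n) => -a j)
    (Matrix.of fun (i : Fin n) (_ : Unit) => -a i) A

/-- The bordered matrix D(t,λ) = [[t, (-a + (λ/2)b)ᵀ],[-a + (λ/2)b, A]]. -/
noncomputable def borderD2 {n : ℕ} (A : Matrix (Fin n) (Fin n) ℝ) (a b : Fin n → ℝ)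
    (t l : ℝ) : Matrix (Unit ⊕ Fin n) (Unit ⊕ Fin n) ℝ :=
  borderD A (fun j => a j - (l / 2) * b j) t

/-- The objective xᵀAx - 2aᵀx. -/
noncomputable def objQ {n : ℕ} (A : Matrix (Fin n) (Fin n) ℝ) (a : Fin n → ℝ)
    (x : Fin n → ℝ) : ℝ :=
  x ⬝ᵥ A.mulVec x - 2 * (a ⬝ᵥ x)

/-- The optimal value p* of eTRS. -/
noncomputable def pstar {n : ℕ} (A : Matrix (Fin n) (Fin n) ℝ) (a b : Fin n → ℝ)
    (c Δ : ℝ) : ℝ :=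
  sInf {v : ℝ | ∃ x : Fin n → ℝ, x ⬝ᵥ x ≤ Δ ∧ b ⬝ᵥ x ≤ c ∧ v = objQ A a x}

/-- The Lagrangian of eTRS. -/
noncomputable def lagr {n : ℕ} (A : Matrix (Fin n) (Fin n) ℝ) (a b : Fin n → ℝ)
    (c Δ : ℝ) (x : Fin n → ℝ) (l1 l2 : ℝ) : ℝ :=
  objQ A a x + l1 * (x ⬝ᵥ x - Δ) + l2 * (b ⬝ᵥ x - c)

/-- The Lagrangian dual value d* of eTRS:
the supremum over λ1, λ2 ≥ 0 of inf_x of the Lagrangian, encoded as the supremum of all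
values that are lower bounds of the Lagrangian for some admissible multipliers. -/
noncomputable def dstar {n : ℕ} (A : Matrix (Fin n) (Fin n) ℝ) (a b : Fin n → ℝ)
    (c Δ : ℝ) : ℝ :=
  sSup {v : ℝ | ∃ l1 l2 : ℝ, 0 ≤ l1 ∧ 0 ≤ l2 ∧ ∀ x : Fin n → ℝ, v ≤ lagr A a b c Δ x l1 l2}

/-- x is a global optimal solution of eTRS. -/
def isOptimal {n : ℕ} (A : Matrix (Fin n) (Fin n) ℝ) (a b : Fin n → ℝ)
    (c Δ : ℝ) (x : Fin n → ℝ) : Prop :=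
  x ⬝ᵥ x ≤ Δ ∧ b ⬝ᵥ x ≤ c ∧
    ∀ y : Fin n → ℝ, y ⬝ᵥ y ≤ Δ → b ⬝ᵥ y ≤ c → objQ A a x ≤ objQ A a y

/-- The dual objective k(t,λ) = (Δ+1)·λmin(D(t,λ)) - t - λc. -/
noncomputable def ktl {n : ℕ} (A : Matrix (Fin n) (Fin n) ℝ) (a b : Fin n → ℝ)
    (c Δ : ℝ) (t l : ℝ) : ℝ :=
  (Δ + 1) * lambdaMin (borderD2 A a b t l) - t - l * c

/-!
When `A` is positive semidefinite, eTRS is convex and strong duality follows from Slater's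
condition. Otherwise put `H = A + l • 1` with `-l < 0` the least eigenvalue of `A`. On the sphere
`x ⬝ᵥ x = Δ` the objectives of `A` and `H` differ by a constant, and the problem for `H` is convex,
so it has a KKT point `p` with some multiplier `μ` of the linear constraint. If `p` lies on the
sphere, it is a KKT point for `A` as well and there is no gap. If `p` is interior, it can be pushed
to the sphere along a kernel vector `u` of `H`, and the result is a KKT point for `A` unless
`μ * (b ⬝ᵥ u) ≠ 0`. A gap therefore forces `μ > 0`, a one-dimensional kernel and `b ⬝ᵥ p = c`, and
the kernel line through `p` meets the sphere on both sides of the hyperplane `b ⬝ᵥ x = c`.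

Conversely, two such points minimise the Lagrangian with multipliers `(l, μ)` and, lying on opposite
sides of the hyperplane, show that these multipliers are optimal for the dual. Without a gap an
optimal solution would be a KKT point with the same multipliers, that is, a point of the kernel line
lying on the sphere and on the hyperplane; but the line meets the sphere only in the two given
points.
-/

section ConvexAlternative

lemma convex_setOf_exists_forall_lt {E ι : Type*} [AddCommGroup E] [Module ℝ E] {s : Set E}
    {g : ι → E → ℝ} (hs : Convex ℝ s) (hg : ∀ i, ConvexOn ℝ s (g i)) :
    Convex ℝ {p : ι → ℝ | ∃ x ∈ s, ∀ i, g i x < p i} := by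
  rw [convex_iff_forall_pos]
  rintro p ⟨x, hx, hxp⟩ q ⟨y, hy, hyq⟩ α β hα hβ hαβ
  refine ⟨α • x + β • y, hs hx hy hα.le hβ.le hαβ, fun i => ?_⟩
  calc g i (α • x + β • y) ≤ α * g i x + β * g i y := (hg i).2 hx hy hα.le hβ.le hαβ
    _ < α * p i + β * q i :=
      add_lt_add (mul_lt_mul_of_pos_left (hxp i) hα) (mul_lt_mul_of_pos_left (hyq i) hβ)

lemma isOpen_setOf_exists_forall_lt {X ι : Type*} [Finite ι] (s : Set X)
    (g : ι → X → ℝ) :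
    IsOpen {p : ι → ℝ | ∃ x ∈ s, ∀ i, g i x < p i} := by
  have h : {p : ι → ℝ | ∃ x ∈ s, ∀ i, g i x < p i} =
      ⋃ x ∈ s, Set.univ.pi fun i => Set.Ioi (g i x) := by
    ext p
    simp
  rw [h]
  exact isOpen_biUnion fun x _ => isOpen_set_pi Set.finite_univ fun i _ => isOpen_Ioi

variable {ι : Type*} [Fintype ι]

lemma nonneg_of_forall_lt_imp_dotProduct_pos {w q : ι → ℝ}
    (h : ∀ p : ι → ℝ, (∀ i, q i < p i) → 0 < w ⬝ᵥ p) : 0 ≤ w := by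
  classical
  by_contra hneg
  obtain ⟨i, hi⟩ : ∃ i, w i < 0 := by simpa [Pi.le_def] using hneg
  have hpos : 0 < w ⬝ᵥ (q + 1) := h _ fun j => lt_add_one (q j)
  set C := w ⬝ᵥ (q + 1)
  have hT : 0 ≤ Pi.single (M := fun _ : ι => ℝ) i (C / -w i) :=
    Pi.single_nonneg.2 (div_pos hpos (neg_pos.2 hi)).le
  -- Raising the `i`-th coordinate by `C / -w i` lowers the positive value `C` to `0`.
  have hlt := h (q + 1 + Pi.single i (C / -w i)) fun j =>
    lt_add_of_lt_of_nonneg (lt_add_one (q j)) (hT j)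
  have hcancel : w i * (C / -w i) = -C := by
    rw [div_neg, mul_neg, mul_div_cancel₀ _ hi.ne]
  rw [dotProduct_add, dotProduct_single, hcancel, add_neg_cancel] at hlt
  exact lt_irrefl 0 hlt

lemma dotProduct_nonneg_of_forall_lt_imp_dotProduct_pos {w q : ι → ℝ}
    (h : ∀ p : ι → ℝ, (∀ i, q i < p i) → 0 < w ⬝ᵥ p) : 0 ≤ w ⬝ᵥ q := by
  have hcont : Continuous fun ε : ℝ => w ⬝ᵥ (q + fun _ => ε) := by fun_prop
  have hlim : Filter.Tendsto (fun ε : ℝ => w ⬝ᵥ (q + fun _ => ε)) (nhdsWithin 0 (Set.Ioi 0))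
      (nhds (w ⬝ᵥ q)) :=
    (hcont.tendsto' 0 _ (congrArg (w ⬝ᵥ ·) (add_zero q))).mono_left nhdsWithin_le_nhds
  exact ge_of_tendsto hlim <| eventually_nhdsWithin_of_forall fun ε hε =>
    (h _ fun i => lt_add_of_pos_right (q i) hε).le

variable {E : Type*} [AddCommGroup E] [Module ℝ E] {s : Set E}

lemma exists_forall_lt_imp_dotProduct_pos {g : ι → E → ℝ} (hs : Convex ℝ s)
    (hg : ∀ i, ConvexOn ℝ s (g i)) (h : ∀ x ∈ s, ∃ i, 0 ≤ g i x) :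
    ∃ w : ι → ℝ, ∀ x ∈ s, ∀ p : ι → ℝ, (∀ i, g i x < p i) → 0 < w ⬝ᵥ p := by
  classical
  have h_zero : (0 : ι → ℝ) ∉ {p : ι → ℝ | ∃ x ∈ s, ∀ i, g i x < p i} := by
    rintro ⟨x, hx, hlt⟩
    obtain ⟨i, hi⟩ := h x hx
    exact (hlt i).not_ge hi
  obtain ⟨f, hf⟩ := geometric_hahn_banach_open_point (convex_setOf_exists_forall_lt hs hg)
    (isOpen_setOf_exists_forall_lt s g) h_zero
  refine ⟨fun i => -f fun j => if i = j then 1 else 0, fun x hx p hp => ?_⟩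
  have hfp : f p = ∑ i, p i • f fun j => if i = j then 1 else 0 :=
    (f : (ι → ℝ) →ₗ[ℝ] ℝ).pi_apply_eq_sum_univ p
  have hneg : f p < 0 := map_zero f ▸ hf p ⟨x, hx, hp⟩
  simpa [hfp, dotProduct, mul_comm] using hneg

lemma exists_forall_dotProduct_nonneg {g : ι → E → ℝ} (hne : s.Nonempty)
    (hg : ∀ i, ConvexOn ℝ s (g i)) (h : ∀ x ∈ s, ∃ i, 0 ≤ g i x) :
    ∃ w : ι → ℝ, 0 ≤ w ∧ w ≠ 0 ∧ ∀ x ∈ s, 0 ≤ w ⬝ᵥ fun i => g i x := by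
  obtain ⟨z, hz⟩ := hne
  obtain ⟨i, -⟩ := h z hz
  obtain ⟨w, hw⟩ := exists_forall_lt_imp_dotProduct_pos (hg i).1 hg h
  refine ⟨w, nonneg_of_forall_lt_imp_dotProduct_pos (hw z hz), ?_, fun x hx =>
    dotProduct_nonneg_of_forall_lt_imp_dotProduct_pos (hw x hx)⟩
  rintro rfl
  simpa using hw z hz (fun i => g i z + 1) fun i => lt_add_one (g i z)

lemma exists_lagrange_multipliers {f : E → ℝ} {g : ι → E → ℝ} {v : ℝ}
    (hf : ConvexOn ℝ s f) (hg : ∀ i, ConvexOn ℝ s (g i)) (hslater : ∃ z ∈ s, ∀ i, g i z < 0)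
    (hv : ∀ x ∈ s, (∀ i, g i x ≤ 0) → v ≤ f x) :
    ∃ m : ι → ℝ, 0 ≤ m ∧ ∀ x ∈ s, v ≤ f x + ∑ i, m i * g i x := by
  obtain ⟨z, hz, hgz⟩ := hslater
  let G : Option ι → E → ℝ := fun o => o.elim (fun x => f x - v) g
  have hG : ∀ o, ConvexOn ℝ s (G o) := by
    rintro (_ | i)
    exacts [hf.sub (concaveOn_const v hf.1), hg i]
  have hsys : ∀ x ∈ s, ∃ o, 0 ≤ G o x := by
    intro x hx
    by_contra! hneg
    have := hv x hx fun i => (hneg (some i)).le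
    exact (hneg none).not_ge (sub_nonneg.2 this)
  obtain ⟨w, hw, hw_ne, hwG⟩ := exists_forall_dotProduct_nonneg ⟨z, hz⟩ hG hsys
  simp only [dotProduct, Fintype.sum_option, G, Option.elim_none, Option.elim_some] at hwG
  have hw_none : 0 < w none := by
    refine (hw none).lt_of_ne fun h0 => hw_ne ?_
    have hterm : ∀ i ∈ Finset.univ, w (some i) * g i z ≤ 0 := fun i _ =>
      mul_nonpos_of_nonneg_of_nonpos (hw (some i)) (hgz i).le
    have hsum : ∑ i, w (some i) * g i z = 0 :=
      (Finset.sum_nonpos hterm).antisymm (by simpa [← h0] using hwG z hz)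
    funext o
    rcases o with _ | i
    · exact h0.symm
    · exact (mul_eq_zero.1 ((Finset.sum_eq_zero_iff_of_nonpos hterm).1 hsum i
        (Finset.mem_univ i))).resolve_right (hgz i).ne
  refine ⟨fun i => w (some i) / w none, fun i => div_nonneg (hw _) (hw _), fun x hx => ?_⟩
  have hdiv : (w none * (f x - v) + ∑ i, w (some i) * g i x) / w none =
      f x - v + ∑ i, w (some i) / w none * g i x := by
    simp only [add_div, Finset.sum_div, mul_div_cancel_left₀ _ hw_none.ne', div_mul_eq_mul_div]
  have := div_nonneg (hwG x hx) hw_none.le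
  linarith

end ConvexAlternative

section Matrix

variable {ι : Type*} [Fintype ι]

lemma dotProduct_self_pos {u : ι → ℝ} (hu : u ≠ 0) : 0 < u ⬝ᵥ u := by
  simpa using dotProduct_star_self_pos_iff.2 hu

lemma exists_pos_dotProduct_self_add_smul_eq {p u : ι → ℝ} {r : ℝ} (hp : p ⬝ᵥ p < r)
    (hu : u ≠ 0) : ∃ t : ℝ, 0 < t ∧ (p + t • u) ⬝ᵥ (p + t • u) = r := by
  have hK := dotProduct_self_pos hu
  set K := u ⬝ᵥ u
  set B := p ⬝ᵥ u with hB
  have hlt : B ^ 2 < B ^ 2 + K * (r - p ⬝ᵥ p) := by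
    linarith [mul_pos hK (sub_pos.2 hp)]
  set D := B ^ 2 + K * (r - p ⬝ᵥ p)
  have hsq : √D ^ 2 = D := Real.sq_sqrt ((sq_nonneg B).trans hlt.le)
  have hBD : B < √D := Real.lt_sqrt_of_sq_lt hlt
  have hroot : ((√D - B) / K) ^ 2 * K + 2 * ((√D - B) / K) * B = r - p ⬝ᵥ p := by
    field_simp
    linarith
  refine ⟨(√D - B) / K, div_pos (sub_pos.2 hBD) hK, ?_⟩
  simp only [dotProduct_add, add_dotProduct, smul_dotProduct, dotProduct_smul, smul_eq_mul,
    dotProduct_comm u p, ← hB]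
  linarith

lemma eq_zero_or_eq_one_of_dotProduct_self_eq {x y : ι → ℝ} {t : ℝ} (hne : x ≠ y)
    (hy : y ⬝ᵥ y = x ⬝ᵥ x) (ht : (x + t • (y - x)) ⬝ᵥ (x + t • (y - x)) = x ⬝ᵥ x) :
    t = 0 ∨ t = 1 := by
  have hpos : 0 < (y - x) ⬝ᵥ (y - x) := dotProduct_self_pos (sub_ne_zero.2 hne.symm)
  have hprod : t * (t - 1) * ((y - x) ⬝ᵥ (y - x)) = 0 := by
    simp only [dotProduct_add, add_dotProduct, smul_dotProduct, dotProduct_smul, smul_eq_mul,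
      dotProduct_sub, sub_dotProduct, dotProduct_comm y x, hy] at ht ⊢
    linarith
  simpa only [mul_eq_zero, hpos.ne', or_false, sub_eq_zero (b := (1 : ℝ))] using hprod

lemma isCompact_setOf_dotProduct_self_le (r : ℝ) : IsCompact {x : ι → ℝ | x ⬝ᵥ x ≤ r} := by
  refine Metric.isCompact_of_isClosed_isBounded
    (isClosed_le (by fun_prop) continuous_const) ?_
  refine (Metric.isBounded_iff_subset_closedBall 0).2 ⟨√r, fun x hx => ?_⟩
  rw [mem_closedBall_zero_iff]
  refine (pi_norm_le_iff_of_nonneg (Real.sqrt_nonneg _)).2 fun i => Real.abs_le_sqrt ?_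
  calc x i ^ 2 = x i * x i := sq _
    _ ≤ x ⬝ᵥ x :=
      Finset.single_le_sum (f := fun j => x j * x j) (fun j _ => mul_self_nonneg _)
        (Finset.mem_univ i)
    _ ≤ r := hx

lemma rank_eq_card_sub_one_iff {K : Type*} [Field K] {M : Matrix ι ι K} {v : ι → K} (hv : v ≠ 0)
    (hMv : M *ᵥ v = 0) :
    M.rank = Fintype.card ι - 1 ↔ ∀ u, M *ᵥ u = 0 → ∃ t : K, t • v = u := by
  let v' : LinearMap.ker M.mulVecLin := ⟨v, hMv⟩
  have hv' : v' ≠ 0 := fun h => hv (congrArg Subtype.val h)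
  have hker_pos : 0 < Module.finrank K (LinearMap.ker M.mulVecLin) :=
    Module.finrank_pos_iff_exists_ne_zero.2 ⟨v', hv'⟩
  have hrank_nullity : M.rank + Module.finrank K (LinearMap.ker M.mulVecLin) = Fintype.card ι := by
    rw [Matrix.rank, LinearMap.finrank_range_add_finrank_ker, Module.finrank_fintype_fun_eq_card]
  have hrank : M.rank = Fintype.card ι - 1 ↔
      Module.finrank K (LinearMap.ker M.mulVecLin) = 1 := by omega
  rw [hrank, finrank_eq_one_iff_of_nonzero' v' hv']
  simp [v', Subtype.ext_iff]

variable [DecidableEq ι]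

lemma exists_posSemidef_add_smul_one {A : Matrix ι ι ℝ} (hA : A.IsHermitian)
    (hneg : ¬ A.PosSemidef) :
    ∃ l : ℝ, 0 < l ∧ (A + l • 1).PosSemidef ∧ ∃ v ≠ 0, (A + l • 1) *ᵥ v = 0 := by
  obtain ⟨k, hk⟩ : ∃ k, hA.eigenvalues k < 0 := by
    simpa [hA.posSemidef_iff_eigenvalues_nonneg, Pi.le_def] using hneg
  have : Nonempty ι := ⟨k⟩
  obtain ⟨i, hi⟩ := Finite.exists_min hA.eigenvalues
  refine ⟨-hA.eigenvalues i, neg_pos.2 ((hi k).trans_lt hk), ?_, hA.eigenvectorBasis i, ?_, ?_⟩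
  · refine posSemidef_iff_isHermitian_and_spectrum_nonneg.2
      ⟨hA.add (isHermitian_one.smul (IsSelfAdjoint.all _)), ?_⟩
    rw [← Algebra.algebraMap_eq_smul_one, ← spectrum.add_singleton_eq,
      hA.spectrum_real_eq_range_eigenvalues]
    rintro _ ⟨_, ⟨j, rfl⟩, _, rfl, rfl⟩
    simpa using hi j
  · simpa using hA.eigenvectorBasis.toBasis.ne_zero i
  · rw [add_mulVec, hA.mulVec_eigenvectorBasis, smul_mulVec, one_mulVec, neg_smul, add_neg_cancel]

end Matrix

section Quadratic

variable {n : ℕ} {H : Matrix (Fin n) (Fin n) ℝ} {w x : Fin n → ℝ}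

lemma continuous_objQ (H : Matrix (Fin n) (Fin n) ℝ) (w : Fin n → ℝ) :
    Continuous (objQ H w) := by
  unfold objQ
  fun_prop

lemma objQ_add_smul (hH : H.IsHermitian) (w x d : Fin n → ℝ) (t : ℝ) :
    objQ H w (x + t • d) =
      objQ H w x + 2 * t * (d ⬝ᵥ (H *ᵥ x - w)) + t ^ 2 * (d ⬝ᵥ H *ᵥ d) := by
  have hsymm : x ⬝ᵥ H *ᵥ d = d ⬝ᵥ H *ᵥ x := by
    have hHt : Hᵀ = H := by simpa [IsHermitian] using hH
    simpa only [hHt] using dotProduct_transpose_mulVec H x d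
  simp only [objQ, mulVec_add, mulVec_smul, dotProduct_add, add_dotProduct, smul_dotProduct,
    dotProduct_smul, smul_eq_mul, dotProduct_sub, hsymm, dotProduct_comm w d]
  ring

lemma mulVec_eq_of_forall_objQ_le (hH : H.IsHermitian) (hmin : ∀ y, objQ H w x ≤ objQ H w y) :
    H *ᵥ x = w := by
  set d := H *ᵥ x - w with hd
  have hquad : ∀ t : ℝ, 0 ≤ d ⬝ᵥ H *ᵥ d * (t * t) + 2 * (d ⬝ᵥ d) * t + 0 := by
    intro t
    have := hmin (x + t • d)
    rw [objQ_add_smul hH, ← hd] at this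
    linarith
  have hd_zero : d ⬝ᵥ d = 0 := by
    have := discrim_le_zero hquad
    rw [discrim] at this
    nlinarith
  exact sub_eq_zero.1 (dotProduct_self_eq_zero.1 hd_zero)

lemma objQ_le_of_mulVec_eq (hH : H.PosSemidef) (hx : H *ᵥ x = w) (y : Fin n → ℝ) :
    objQ H w x ≤ objQ H w y := by
  have hexpand := objQ_add_smul hH.1 w x (y - x) 1
  have hnonneg : 0 ≤ (y - x) ⬝ᵥ H *ᵥ (y - x) := by
    simpa using hH.dotProduct_mulVec_nonneg (y - x)
  simp only [hx, one_smul, add_sub_cancel, sub_self, dotProduct_zero, mul_zero, add_zero,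
    one_pow, one_mul] at hexpand
  linarith

lemma convexOn_objQ (hH : H.PosSemidef) (w : Fin n → ℝ) : ConvexOn ℝ Set.univ (objQ H w) := by
  refine ⟨convex_univ, fun x _ y _ s t hs ht hst => ?_⟩
  obtain rfl : t = 1 - s := by linarith
  have hnonneg : 0 ≤ s * (1 - s) * ((y - x) ⬝ᵥ H *ᵥ (y - x)) :=
    mul_nonneg (mul_nonneg hs ht) (by simpa using hH.dotProduct_mulVec_nonneg (y - x))
  have hpoint : s • x + (1 - s) • y = x + (1 - s) • (y - x) := by module
  have hy := objQ_add_smul hH.1 w x (y - x) 1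
  rw [one_smul, add_sub_cancel] at hy
  rw [hpoint, objQ_add_smul hH.1, hy, smul_eq_mul, smul_eq_mul]
  linarith

lemma convexOn_dotProduct_self : ConvexOn ℝ Set.univ fun x : Fin n → ℝ => x ⬝ᵥ x := by
  have h : (fun x : Fin n → ℝ => x ⬝ᵥ x) = objQ 1 0 := by
    funext x
    simp [objQ]
  exact h ▸ convexOn_objQ PosSemidef.one 0

end Quadratic

section TrustRegion

variable {n : ℕ} {A : Matrix (Fin n) (Fin n) ℝ} {a b x : Fin n → ℝ} {c Δ l μ : ℝ}

lemma lagr_eq_objQ (A : Matrix (Fin n) (Fin n) ℝ) (a b : Fin n → ℝ) (c Δ : ℝ) (x : Fin n → ℝ)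
    (l μ : ℝ) :
    lagr A a b c Δ x l μ = objQ (A + l • 1) (a - (μ / 2) • b) x - l * Δ - μ * c := by
  simp only [lagr, objQ, add_mulVec, smul_mulVec, one_mulVec, dotProduct_add, dotProduct_smul,
    sub_dotProduct, smul_dotProduct, smul_eq_mul]
  ring

lemma lagr_le_of_mulVec_eq (hH : (A + l • 1).PosSemidef)
    (hx : (A + l • 1) *ᵥ x = a - (μ / 2) • b) (y : Fin n → ℝ) :
    lagr A a b c Δ x l μ ≤ lagr A a b c Δ y l μ := by
  rw [lagr_eq_objQ, lagr_eq_objQ]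
  linarith [objQ_le_of_mulVec_eq hH hx y]

lemma lagr_le_objQ (hl : 0 ≤ l) (hμ : 0 ≤ μ) (hxΔ : x ⬝ᵥ x ≤ Δ) (hxc : b ⬝ᵥ x ≤ c) :
    lagr A a b c Δ x l μ ≤ objQ A a x := by
  have := mul_nonpos_of_nonneg_of_nonpos hl (sub_nonpos.2 hxΔ)
  have := mul_nonpos_of_nonneg_of_nonpos hμ (sub_nonpos.2 hxc)
  unfold lagr
  linarith

lemma pstar_eq_objQ_of_isOptimal (hx : isOptimal A a b c Δ x) :
    pstar A a b c Δ = objQ A a x := by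
  apply IsLeast.csInf_eq
  refine ⟨⟨x, hx.1, hx.2.1, rfl⟩, ?_⟩
  rintro _ ⟨y, hyΔ, hyc, rfl⟩
  exact hx.2.2 y hyΔ hyc

lemma exists_isOptimal (A : Matrix (Fin n) (Fin n) ℝ) (a : Fin n → ℝ)
    (hfeas : ∃ x : Fin n → ℝ, x ⬝ᵥ x ≤ Δ ∧ b ⬝ᵥ x ≤ c) : ∃ x, isOptimal A a b c Δ x := by
  have hclosed : IsClosed {x : Fin n → ℝ | b ⬝ᵥ x ≤ c} :=
    isClosed_le (by fun_prop) continuous_const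
  obtain ⟨x, ⟨hxΔ, hxc⟩, hmin⟩ :=
    ((isCompact_setOf_dotProduct_self_le Δ).inter_right hclosed).exists_isMinOn hfeas
      (continuous_objQ A a).continuousOn
  exact ⟨x, hxΔ, hxc, fun y hyΔ hyc => hmin ⟨hyΔ, hyc⟩⟩

/-- The Karush–Kuhn–Tucker conditions for eTRS at `x`, with multiplier `l` of the ball constraint
and multiplier `μ` of the linear constraint. -/
structure IsKKT (A : Matrix (Fin n) (Fin n) ℝ) (a b : Fin n → ℝ) (c Δ : ℝ) (x : Fin n → ℝ)
    (l μ : ℝ) : Prop where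
  ball_le : x ⬝ᵥ x ≤ Δ
  linear_le : b ⬝ᵥ x ≤ c
  ball_multiplier_nonneg : 0 ≤ l
  linear_multiplier_nonneg : 0 ≤ μ
  mulVec_eq : (A + l • 1) *ᵥ x = a - (μ / 2) • b
  ball_slackness : l * (x ⬝ᵥ x - Δ) = 0
  linear_slackness : μ * (b ⬝ᵥ x - c) = 0

lemma isKKT_of_forall_objQ_le_lagr (hA : A.IsHermitian) (hxΔ : x ⬝ᵥ x ≤ Δ) (hxc : b ⬝ᵥ x ≤ c)
    (hl : 0 ≤ l) (hμ : 0 ≤ μ) (hle : ∀ y, objQ A a x ≤ lagr A a b c Δ y l μ) :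
    IsKKT A a b c Δ x l μ := by
  have hball := mul_nonpos_of_nonneg_of_nonpos hl (sub_nonpos.2 hxΔ)
  have hlinear := mul_nonpos_of_nonneg_of_nonpos hμ (sub_nonpos.2 hxc)
  have hx := hle x
  unfold lagr at hx
  refine ⟨hxΔ, hxc, hl, hμ, ?_, by linarith, by linarith⟩
  refine mulVec_eq_of_forall_objQ_le
    (hA.add (isHermitian_one.smul (IsSelfAdjoint.all _))) fun y => ?_
  have := (lagr_le_objQ hl hμ hxΔ hxc).trans (hle y)
  rw [lagr_eq_objQ, lagr_eq_objQ] at this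
  linarith

lemma IsKKT.pstar_eq_dstar (h : IsKKT A a b c Δ x l μ) (hH : (A + l • 1).PosSemidef) :
    pstar A a b c Δ = dstar A a b c Δ := by
  have hle : ∀ y, objQ A a x ≤ lagr A a b c Δ y l μ := fun y => by
    have hx : lagr A a b c Δ x l μ = objQ A a x := by
      rw [lagr, h.ball_slackness, h.linear_slackness, add_zero, add_zero]
    exact hx ▸ lagr_le_of_mulVec_eq hH h.mulVec_eq y
  have hopt : isOptimal A a b c Δ x := ⟨h.ball_le, h.linear_le, fun y hyΔ hyc =>
    (hle y).trans (lagr_le_objQ h.ball_multiplier_nonneg h.linear_multiplier_nonneg hyΔ hyc)⟩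
  have hgreatest : IsGreatest
      {v | ∃ l μ : ℝ, 0 ≤ l ∧ 0 ≤ μ ∧ ∀ y, v ≤ lagr A a b c Δ y l μ} (objQ A a x) := by
    refine ⟨⟨l, μ, h.ball_multiplier_nonneg, h.linear_multiplier_nonneg, hle⟩, ?_⟩
    rintro v ⟨l', μ', hl', hμ', hv⟩
    exact (hv x).trans (lagr_le_objQ hl' hμ' h.ball_le h.linear_le)
  rw [pstar_eq_objQ_of_isOptimal hopt, dstar, hgreatest.csSup_eq]

lemma IsKKT.of_add_smul_one {α : ℝ} (h : IsKKT (A + l • 1) a b c Δ x α μ) (hl : 0 ≤ l)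
    (hslack : l * (x ⬝ᵥ x - Δ) = 0) : IsKKT A a b c Δ x (l + α) μ where
  ball_le := h.ball_le
  linear_le := h.linear_le
  ball_multiplier_nonneg := add_nonneg hl h.ball_multiplier_nonneg
  linear_multiplier_nonneg := h.linear_multiplier_nonneg
  mulVec_eq := by rw [add_smul, ← add_assoc, h.mulVec_eq]
  ball_slackness := by rw [add_mul, hslack, h.ball_slackness, add_zero]
  linear_slackness := h.linear_slackness

lemma exists_isKKT_of_posSemidef (hA : A.PosSemidef) (a : Fin n → ℝ)
    (hslater : ∃ x : Fin n → ℝ, x ⬝ᵥ x < Δ ∧ b ⬝ᵥ x < c) :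
    ∃ x l μ, IsKKT A a b c Δ x l μ := by
  obtain ⟨z, hzΔ, hzc⟩ := hslater
  obtain ⟨x, hxΔ, hxc, hmin⟩ := exists_isOptimal A a ⟨z, hzΔ.le, hzc.le⟩
  let g : Fin 2 → (Fin n → ℝ) → ℝ := ![fun y => y ⬝ᵥ y - Δ, fun y => b ⬝ᵥ y - c]
  have hg : ∀ i, ConvexOn ℝ Set.univ (g i) := by
    refine Fin.forall_fin_two.2 ⟨?_, ?_⟩
    · exact convexOn_dotProduct_self.sub (concaveOn_const Δ convex_univ)
    · exact ((dotProductBilin ℝ ℝ b).convexOn convex_univ).sub (concaveOn_const c convex_univ)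
  obtain ⟨m, hm, hle⟩ := exists_lagrange_multipliers (v := objQ A a x) (convexOn_objQ hA a) hg
    ⟨z, Set.mem_univ z, Fin.forall_fin_two.2 ⟨sub_neg.2 hzΔ, sub_neg.2 hzc⟩⟩
    fun y _ hy => hmin y (sub_nonpos.1 (hy 0)) (sub_nonpos.1 (hy 1))
  refine ⟨x, m 0, m 1, isKKT_of_forall_objQ_le_lagr hA.1 hxΔ hxc (hm 0) (hm 1) fun y => ?_⟩
  simpa [g, lagr, Fin.sum_univ_two, add_assoc] using hle y (Set.mem_univ y)

end TrustRegion

section DualityGap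

variable {n : ℕ} {A : Matrix (Fin n) (Fin n) ℝ} {a b p : Fin n → ℝ} {c Δ l μ : ℝ}

lemma exists_isKKT_interior_of_pstar_ne_dstar (hne : pstar A a b c Δ ≠ dstar A a b c Δ)
    (hslater : ∃ x : Fin n → ℝ, x ⬝ᵥ x < Δ ∧ b ⬝ᵥ x < c) (hl : 0 ≤ l)
    (hH : (A + l • 1).PosSemidef) :
    ∃ p μ, p ⬝ᵥ p < Δ ∧ IsKKT (A + l • 1) a b c Δ p 0 μ := by
  obtain ⟨p, α, μ, hp⟩ := exists_isKKT_of_posSemidef hH a hslater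
  have hpΔ : p ⬝ᵥ p < Δ := by
    refine hp.ball_le.lt_of_ne fun heq => hne ?_
    refine (hp.of_add_smul_one hl (by rw [heq, sub_self, mul_zero])).pstar_eq_dstar ?_
    rw [add_smul, ← add_assoc]
    exact hH.add (PosSemidef.one.smul hp.ball_multiplier_nonneg)
  obtain rfl : α = 0 := (mul_eq_zero.1 hp.ball_slackness).resolve_right (sub_neg.2 hpΔ).ne
  exact ⟨p, μ, hpΔ, hp⟩

lemma IsKKT.mul_dotProduct_ne_zero (hp : IsKKT (A + l • 1) a b c Δ p 0 μ) (hpΔ : p ⬝ᵥ p < Δ)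
    (hne : pstar A a b c Δ ≠ dstar A a b c Δ) (hl : 0 ≤ l) (hH : (A + l • 1).PosSemidef)
    {u : Fin n → ℝ} (hu : u ≠ 0) (hHu : (A + l • 1) *ᵥ u = 0) : μ * (b ⬝ᵥ u) ≠ 0 := by
  intro hμu
  wlog hbu : b ⬝ᵥ u ≤ 0 generalizing u
  · exact this (neg_ne_zero.2 hu) (by rw [mulVec_neg, hHu, neg_zero])
      (by rw [dotProduct_neg, mul_neg, hμu, neg_zero]) (by rw [dotProduct_neg]; linarith)
  obtain ⟨t, ht, hroot⟩ := exists_pos_dotProduct_self_add_smul_eq hpΔ hu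
  have hpush : IsKKT A a b c Δ (p + t • u) l μ :=
    { ball_le := hroot.le
      linear_le := by
        rw [dotProduct_add, dotProduct_smul, smul_eq_mul]
        linarith [hp.linear_le, mul_nonpos_of_nonneg_of_nonpos ht.le hbu]
      ball_multiplier_nonneg := hl
      linear_multiplier_nonneg := hp.linear_multiplier_nonneg
      mulVec_eq := by
        rw [mulVec_add, mulVec_smul, hHu, smul_zero, add_zero]
        simpa using hp.mulVec_eq
      ball_slackness := by rw [hroot, sub_self, mul_zero]
      linear_slackness := by
        rw [dotProduct_add, dotProduct_smul, smul_eq_mul]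
        linear_combination hp.linear_slackness + t * hμu }
  exact hne (hpush.pstar_eq_dstar hH)

lemma exists_sphere_solutions_of_pstar_ne_dstar (hne : pstar A a b c Δ ≠ dstar A a b c Δ)
    (hslater : ∃ x : Fin n → ℝ, x ⬝ᵥ x < Δ ∧ b ⬝ᵥ x < c) (hl : 0 ≤ l)
    (hH : (A + l • 1).PosSemidef) {v : Fin n → ℝ} (hv : v ≠ 0) (hHv : (A + l • 1) *ᵥ v = 0) :
    ∃ μ : ℝ, 0 < μ ∧ (A + l • 1).rank = n - 1 ∧ ∃ x1 x2 : Fin n → ℝ,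
      (A + l • 1) *ᵥ x1 = a - (μ / 2) • b ∧ (A + l • 1) *ᵥ x2 = a - (μ / 2) • b ∧
      x1 ⬝ᵥ x1 = Δ ∧ x2 ⬝ᵥ x2 = Δ ∧ (b ⬝ᵥ x1 - c) * (b ⬝ᵥ x2 - c) < 0 := by
  obtain ⟨p, μ, hpΔ, hp⟩ := exists_isKKT_interior_of_pstar_ne_dstar hne hslater hl hH
  have hker : ∀ u, u ≠ 0 → (A + l • 1) *ᵥ u = 0 → μ * (b ⬝ᵥ u) ≠ 0 := fun u hu hHu =>
    hp.mul_dotProduct_ne_zero hpΔ hne hl hH hu hHu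
  have hμ : μ ≠ 0 := left_ne_zero_of_mul (hker v hv hHv)
  have hbv : b ⬝ᵥ v ≠ 0 := right_ne_zero_of_mul (hker v hv hHv)
  have hbp : b ⬝ᵥ p = c := sub_eq_zero.1 ((mul_eq_zero.1 hp.linear_slackness).resolve_left hμ)
  have hHp : (A + l • 1) *ᵥ p = a - (μ / 2) • b := by simpa using hp.mulVec_eq
  have hrank : (A + l • 1).rank = n - 1 := by
    have hrank_iff := rank_eq_card_sub_one_iff hv hHv
    rw [Fintype.card_fin] at hrank_iff
    refine hrank_iff.2 fun u hHu => ⟨b ⬝ᵥ u / b ⬝ᵥ v, ?_⟩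
    by_contra hne_u
    refine hker (u - (b ⬝ᵥ u / b ⬝ᵥ v) • v) (sub_ne_zero.2 (Ne.symm hne_u)) ?_ ?_
    · rw [mulVec_sub, mulVec_smul, hHv, hHu, smul_zero, sub_zero]
    · rw [dotProduct_sub, dotProduct_smul, smul_eq_mul, div_mul_cancel₀ _ hbv, sub_self, mul_zero]
  obtain ⟨t₁, ht₁, hroot₁⟩ := exists_pos_dotProduct_self_add_smul_eq hpΔ hv
  obtain ⟨t₂, ht₂, hroot₂⟩ := exists_pos_dotProduct_self_add_smul_eq hpΔ (neg_ne_zero.2 hv)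
  refine ⟨μ, hp.linear_multiplier_nonneg.lt_of_ne' hμ, hrank, p + t₁ • v, p + t₂ • -v,
    ?_, ?_, hroot₁, hroot₂, ?_⟩
  · rw [mulVec_add, mulVec_smul, hHv, hHp, smul_zero, add_zero]
  · rw [mulVec_add, mulVec_smul, mulVec_neg, hHv, hHp, neg_zero, smul_zero, add_zero]
  · calc (b ⬝ᵥ (p + t₁ • v) - c) * (b ⬝ᵥ (p + t₂ • -v) - c) = -(t₁ * t₂ * (b ⬝ᵥ v) ^ 2) := by
          simp only [dotProduct_add, dotProduct_smul, dotProduct_neg, smul_eq_mul, hbp]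
          ring
      _ < 0 := neg_neg_of_pos (by positivity)

lemma dstar_eq_lagr {x1 x2 : Fin n → ℝ} (hl : 0 ≤ l) (hμ : 0 ≤ μ) (hH : (A + l • 1).PosSemidef)
    (h1 : (A + l • 1) *ᵥ x1 = a - (μ / 2) • b) (h2 : (A + l • 1) *ᵥ x2 = a - (μ / 2) • b)
    (hx1 : x1 ⬝ᵥ x1 = Δ) (hx2 : x2 ⬝ᵥ x2 = Δ) (hopp : (b ⬝ᵥ x1 - c) * (b ⬝ᵥ x2 - c) < 0) :
    dstar A a b c Δ = lagr A a b c Δ x1 l μ := by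
  apply IsGreatest.csSup_eq
  refine ⟨⟨l, μ, hl, hμ, lagr_le_of_mulVec_eq hH h1⟩, ?_⟩
  rintro v ⟨l', μ', -, -, hv⟩
  have hchange : ∀ y : Fin n → ℝ, y ⬝ᵥ y = Δ →
      lagr A a b c Δ y l' μ' = lagr A a b c Δ y l μ + (μ' - μ) * (b ⬝ᵥ y - c) := by
    intro y hy
    rw [lagr, lagr, hy]
    ring
  have hv1 : v ≤ lagr A a b c Δ x1 l μ + (μ' - μ) * (b ⬝ᵥ x1 - c) := hchange x1 hx1 ▸ hv x1
  have hv2 : v ≤ lagr A a b c Δ x1 l μ + (μ' - μ) * (b ⬝ᵥ x2 - c) :=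
    calc v ≤ lagr A a b c Δ x2 l' μ' := hv x2
      _ = lagr A a b c Δ x2 l μ + (μ' - μ) * (b ⬝ᵥ x2 - c) := hchange x2 hx2
      _ ≤ _ := by gcongr; exact lagr_le_of_mulVec_eq hH h2 x1
  have hprod : (μ' - μ) * (b ⬝ᵥ x1 - c) * ((μ' - μ) * (b ⬝ᵥ x2 - c)) ≤ 0 := by
    rw [mul_mul_mul_comm]
    exact mul_nonpos_of_nonneg_of_nonpos (mul_self_nonneg _) hopp.le
  rcases mul_nonpos_iff.1 hprod with h | h <;> linarith

lemma pstar_ne_dstar_of_sphere_solutions {x1 x2 : Fin n → ℝ} (hA : A.IsHermitian)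
    (hfeas : ∃ x : Fin n → ℝ, x ⬝ᵥ x ≤ Δ ∧ b ⬝ᵥ x ≤ c) (hl : 0 < l) (hμ : 0 < μ)
    (hH : (A + l • 1).PosSemidef) (hrank : (A + l • 1).rank = n - 1)
    (h1 : (A + l • 1) *ᵥ x1 = a - (μ / 2) • b) (h2 : (A + l • 1) *ᵥ x2 = a - (μ / 2) • b)
    (hx1 : x1 ⬝ᵥ x1 = Δ) (hx2 : x2 ⬝ᵥ x2 = Δ) (hopp : (b ⬝ᵥ x1 - c) * (b ⬝ᵥ x2 - c) < 0) :
    pstar A a b c Δ ≠ dstar A a b c Δ := by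
  obtain ⟨o, ho⟩ := exists_isOptimal A a hfeas
  rw [pstar_eq_objQ_of_isOptimal ho, dstar_eq_lagr hl.le hμ.le hH h1 h2 hx1 hx2 hopp]
  intro heq
  have hkkt : IsKKT A a b c Δ o l μ :=
    isKKT_of_forall_objQ_le_lagr hA ho.1 ho.2.1 hl.le hμ.le fun y =>
      heq.trans_le (lagr_le_of_mulVec_eq hH h1 y)
  have hoΔ : o ⬝ᵥ o = Δ := sub_eq_zero.1 ((mul_eq_zero.1 hkkt.ball_slackness).resolve_left hl.ne')
  have hbo : b ⬝ᵥ o = c := sub_eq_zero.1 ((mul_eq_zero.1 hkkt.linear_slackness).resolve_left hμ.ne')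
  have h_ne : x1 ≠ x2 := fun h => hopp.not_ge (h ▸ mul_self_nonneg _)
  obtain ⟨t, ht⟩ : ∃ t : ℝ, t • (x2 - x1) = o - x1 := by
    refine (rank_eq_card_sub_one_iff (sub_ne_zero.2 h_ne.symm) ?_).1
      (by rw [hrank, Fintype.card_fin]) (o - x1) ?_
    · rw [mulVec_sub, h1, h2, sub_self]
    · rw [mulVec_sub, h1, hkkt.mulVec_eq, sub_self]
  obtain rfl : o = x1 + t • (x2 - x1) := by rw [ht, add_sub_cancel]
  rcases eq_zero_or_eq_one_of_dotProduct_self_eq h_ne (hx2.trans hx1.symm) (hoΔ.trans hx1.symm)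
    with rfl | rfl
  · rw [zero_smul, add_zero] at hbo
    simp [hbo] at hopp
  · rw [one_smul, add_sub_cancel] at hbo
    simp [hbo] at hopp

end DualityGap

theorem stmt4_general {n : ℕ} (A : Matrix (Fin n) (Fin n) ℝ) (hA : A.IsHermitian)
    (a b : Fin n → ℝ) (c Δ : ℝ) (hslater : ∃ x : Fin n → ℝ, x ⬝ᵥ x < Δ ∧ b ⬝ᵥ x < c) :
    pstar A a b c Δ ≠ dstar A a b c Δ ↔
      ∃ l μ : ℝ, 0 < l ∧ 0 < μ ∧
        (A + l • (1 : Matrix (Fin n) (Fin n) ℝ)).PosSemidef ∧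
        (A + l • (1 : Matrix (Fin n) (Fin n) ℝ)).rank = n - 1 ∧
        ∃ x1 x2 : Fin n → ℝ,
          (A + l • (1 : Matrix (Fin n) (Fin n) ℝ)).mulVec x1 = a - (μ / 2) • b ∧
          (A + l • (1 : Matrix (Fin n) (Fin n) ℝ)).mulVec x2 = a - (μ / 2) • b ∧
          x1 ⬝ᵥ x1 = Δ ∧ x2 ⬝ᵥ x2 = Δ ∧ (b ⬝ᵥ x1 - c) * (b ⬝ᵥ x2 - c) < 0 := by
  constructor
  · intro hne
    have hneg : ¬ A.PosSemidef := fun hpos => by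
      obtain ⟨x, l, μ, hx⟩ := exists_isKKT_of_posSemidef hpos a hslater
      exact hne (hx.pstar_eq_dstar (hpos.add (PosSemidef.one.smul hx.ball_multiplier_nonneg)))
    obtain ⟨l, hl, hH, v, hv, hHv⟩ := exists_posSemidef_add_smul_one hA hneg
    obtain ⟨μ, hμ, hrank, hsol⟩ :=
      exists_sphere_solutions_of_pstar_ne_dstar hne hslater hl.le hH hv hHv
    exact ⟨l, μ, hl, hμ, hH, hrank, hsol⟩
  · rintro ⟨l, μ, hl, hμ, hH, hrank, x1, x2, h1, h2, hx1, hx2, hopp⟩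
    exact pstar_ne_dstar_of_sphere_solutions hA (hslater.imp fun _ hx => hx.imp le_of_lt le_of_lt)
      hl hμ hH hrank h1 h2 hx1 hx2 hopp

/-- Theorem 3 (Ai–Zhang), necessary and sufficient condition for
failure of strong duality for eTRS. -/
theorem stmt4 {n : ℕ} (hn : 1 ≤ n) (A : Matrix (Fin n) (Fin n) ℝ) (hA : A.IsHermitian)
    (hnpd : ¬ A.PosDef) (a b : Fin n → ℝ) (c Δ : ℝ) (hΔ : 0 < Δ)
    (hslater : ∃ x : Fin n → ℝ, x ⬝ᵥ x < Δ ∧ b ⬝ᵥ x < c) :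
    pstar A a b c Δ ≠ dstar A a b c Δ ↔
      ∃ l μ : ℝ, 0 < l ∧ 0 < μ ∧
        (A + l • (1 : Matrix (Fin n) (Fin n) ℝ)).PosSemidef ∧
        (A + l • (1 : Matrix (Fin n) (Fin n) ℝ)).rank = n - 1 ∧
        ∃ x1 x2 : Fin n → ℝ,
          (A + l • (1 : Matrix (Fin n) (Fin n) ℝ)).mulVec x1 = a - (μ / 2) • b ∧
          (A + l • (1 : Matrix (Fin n) (Fin n) ℝ)).mulVec x2 = a - (μ / 2) • b ∧
          x1 ⬝ᵥ x1 = Δ ∧ x2 ⬝ᵥ x2 = Δ ∧ (b ⬝ᵥ x1 - c) * (b ⬝ᵥ x2 - c) < 0 :=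
  stmt4_general A hA a b c Δ hslater
end

section
/- (Tightness of the eigenvalue dual with respect to the SDO relaxation) Suppose eTRS satisfies the Slater condition. Define the SDO relaxation value d_r* := inf{ M0•X : X an (n+1)×(n+1) real symmetric positive semidefinite matrix, M1•X ≤ Δ, M2•X ≤ c, M3•X = 1 }, where M0 = [[0, −aᵀ],[−a, A]], M1 = [[0, 0],[0, I_n]], M2 = [[0, bᵀ/2],[b/2, 0]], M3 = [[1, 0],[0, 0]], and • denotes the trace inner product. Then d* = d_r*, and moreover both the supremum defining d* (over t ∈ ℝ, λ ≥ 0 of (Δ+1)λmin(D(t,λ)) − t − λc) and the infimum defining d_r* are attained. -/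
open Matrix

/-- The data matrices of the SDO relaxation of eTRS. -/
noncomputable def sdoM1 (n : ℕ) : Matrix (Unit ⊕ Fin n) (Unit ⊕ Fin n) ℝ :=
  Matrix.fromBlocks 0 0 0 1

noncomputable def sdoM2 {n : ℕ} (b : Fin n → ℝ) : Matrix (Unit ⊕ Fin n) (Unit ⊕ Fin n) ℝ :=
  Matrix.fromBlocks 0 (Matrix.of fun (_ : Unit) (j : Fin n) => b j / 2)
    (Matrix.of fun (i : Fin n) (_ : Unit) => b i / 2) 0

noncomputable def sdoM3 (n : ℕ) : Matrix (Unit ⊕ Fin n) (Unit ⊕ Fin n) ℝ :=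
  Matrix.fromBlocks 1 0 0 0

/-- The optimal value of the SDO relaxation of eTRS (M0 = borderD A a 0 = [[0,-aᵀ],[-a,A]],
and M•X is the trace inner product). -/
noncomputable def drstar {n : ℕ} (A : Matrix (Fin n) (Fin n) ℝ) (a b : Fin n → ℝ)
    (c Δ : ℝ) : ℝ :=
  sInf {v : ℝ | ∃ X : Matrix (Unit ⊕ Fin n) (Unit ⊕ Fin n) ℝ, X.PosSemidef ∧
    (sdoM1 n * X).trace ≤ Δ ∧ (sdoM2 b * X).trace ≤ c ∧
    (sdoM3 n * X).trace = 1 ∧ v = (borderD A a 0 * X).trace}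

/-!
Both inequalities `k(t, λ) ≤ d* ≤ dᵣ*` are direct. Since `A` is not positive definite,
`λmin(D(t, λ)) ≤ 0`, so `-λmin(D(t, λ))` and `λ` are admissible multipliers, and testing
`D(t, λ) ⪰ λmin(D(t, λ)) I` on the vectors `(1, x)` shows that `k(t, λ)` bounds their Lagrangian
from below. Conversely, homogenizing a lower bound of a Lagrangian yields a positive semidefinite
slack matrix, whose pairing with any feasible `X` is nonnegative.

To close the chain, `dᵣ* ≤ k(t, λ)` is needed for some `t` and `λ ≥ 0`. Over the matrices `X ⪰ 0` of
trace `Δ + 1`, the constraint `M3 • X = 1` makes `M1 • X = Δ` automatic, so only `M2 • X ≤ c` and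
`M3 • X = 1` need multipliers `λ` and `t`, and minimising the resulting linear functional
`D(t, λ) • X` gives `(Δ + 1) λmin(D(t, λ))`. Dualizing one constraint at a time, a multiplier is a
number lying between two sets of slopes, and convexity says that these sets are ordered.
-/

section LagrangeMultipliers

variable {E : Type*} [AddCommGroup E] [Module ℝ E] {K : Set E} {f g : E → ℝ} {p : ℝ}

-- The weights are those of the point of `[x, y]` where an affine function equal to `α` at `x` and
-- `-β` at `y` vanishes.
lemma slope_le_slope_of_convexOn (hf : ConvexOn ℝ K f) {x y : E} (hx : x ∈ K) (hy : y ∈ K)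
    {α β : ℝ} (hα : 0 < α) (hβ : 0 < β)
    (hp : p ≤ f ((β / (α + β)) • x + (α / (α + β)) • y)) :
    (p - f x) / α ≤ (f y - p) / β := by
  have hconv : p ≤ β / (α + β) * f x + α / (α + β) * f y :=
    hp.trans (hf.2 hx hy (by positivity) (by positivity) (by field_simp; ring))
  have hcleared : (α + β) * p ≤ β * f x + α * f y := by
    field_simp at hconv
    linarith
  rw [div_le_div_iff₀ hα hβ]
  linarith

lemma exists_multiplier_of_slope_le_slope {α : Type*} {K : Set α} {f g : α → ℝ}
    (hneg : ∃ x ∈ K, g x < 0) (hpos : ∃ x ∈ K, 0 < g x) (hzero : ∀ x ∈ K, g x = 0 → p ≤ f x)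
    (hslope : ∀ x ∈ K, ∀ y ∈ K, 0 < g x → g y < 0 → (p - f x) / g x ≤ (f y - p) / -g y) :
    ∃ t : ℝ, ∀ x ∈ K, p ≤ f x + t * g x := by
  have hsep : ∀ s ∈ (fun x ↦ (p - f x) / g x) '' {x ∈ K | 0 < g x},
      ∀ t ∈ (fun y ↦ (f y - p) / -g y) '' {y ∈ K | g y < 0}, s ≤ t := by
    rintro _ ⟨x, ⟨hx, hgx⟩, rfl⟩ _ ⟨y, ⟨hy, hgy⟩, rfl⟩
    exact hslope x hx y hy hgx hgy
  obtain ⟨t, hle, hge⟩ := exists_between_of_forall_le (Set.Nonempty.image _ hpos)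
    (Set.Nonempty.image _ hneg) hsep
  refine ⟨t, fun x hx ↦ ?_⟩
  rcases lt_trichotomy (g x) 0 with hgx | hgx | hgx
  · have hslope_x := hge (Set.mem_image_of_mem _ ⟨hx, hgx⟩)
    rw [le_div_iff₀ (neg_pos.2 hgx)] at hslope_x
    linarith
  · simpa [hgx] using hzero x hx hgx
  · have hslope_x := hle (Set.mem_image_of_mem _ ⟨hx, hgx⟩)
    rw [div_le_iff₀ hgx] at hslope_x
    linarith

lemma exists_multiplier_of_linear_eq (hf : ConvexOn ℝ K f) (h : E →ₗ[ℝ] ℝ) {r : ℝ}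
    (hlt : ∃ x ∈ K, h x < r) (hgt : ∃ x ∈ K, r < h x) (hp : ∀ x ∈ K, h x = r → p ≤ f x) :
    ∃ t : ℝ, ∀ x ∈ K, p ≤ f x + t * (h x - r) := by
  refine exists_multiplier_of_slope_le_slope (by simpa using hlt) (by simpa using hgt)
    (fun x hx hhx ↦ hp x hx (sub_eq_zero.1 hhx)) fun x hx y hy hα hβ ↦ ?_
  rw [← neg_pos] at hβ
  have hsum : h x - r + -(h y - r) ≠ 0 := by positivity
  refine slope_le_slope_of_convexOn hf hx hy hα hβ
    (hp _ (hf.1 hx hy (by positivity) (by positivity) (by field_simp; ring)) ?_)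
  simp only [map_add, map_smul, smul_eq_mul]
  field_simp
  ring

lemma exists_multiplier_of_convexOn_le (hf : ConvexOn ℝ K f) (hg : ConvexOn ℝ K g)
    (hslater : ∃ x ∈ K, g x < 0) (hp : ∀ x ∈ K, g x ≤ 0 → p ≤ f x) :
    ∃ l : ℝ, 0 ≤ l ∧ ∀ x ∈ K, p ≤ f x + l * g x := by
  by_cases hpos : ∃ x ∈ K, 0 < g x
  · obtain ⟨t, ht⟩ := exists_multiplier_of_slope_le_slope hslater hpos
      (fun x hx hgx ↦ hp x hx hgx.le) fun x hx y hy hα hβ ↦ by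
        rw [← neg_pos] at hβ
        have hsum : g x + -g y ≠ 0 := by positivity
        have hβ₀ : 0 ≤ -g y / (g x + -g y) := by positivity
        have hα₀ : 0 ≤ g x / (g x + -g y) := by positivity
        have hone : -g y / (g x + -g y) + g x / (g x + -g y) = 1 := by field_simp; ring
        refine slope_le_slope_of_convexOn hf hx hy hα hβ (hp _ (hf.1 hx hy hβ₀ hα₀ hone) ?_)
        refine (hg.2 hx hy hβ₀ hα₀ hone).trans_eq ?_
        simp only [smul_eq_mul]
        field_simp
        ring
    refine ⟨max t 0, le_max_right _ _, fun x hx ↦ ?_⟩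
    rcases le_total t 0 with hnonpos | hnonneg
    · rw [max_eq_right hnonpos, zero_mul, add_zero]
      rcases le_total (g x) 0 with hgx | hgx
      · exact hp x hx hgx
      · linarith [ht x hx, mul_nonpos_of_nonpos_of_nonneg hnonpos hgx]
    · rw [max_eq_left hnonneg]
      exact ht x hx
  · push Not at hpos
    exact ⟨0, le_rfl, fun x hx ↦ by simpa using hp x hx (hpos x hx)⟩

lemma exists_lagrange_multipliers_s7 (hf : ConvexOn ℝ K f) (hg : ConvexOn ℝ K g) (h : E →ₗ[ℝ] ℝ)
    {r : ℝ} (hslater : ∃ x ∈ K, h x = r ∧ g x < 0) (hlt : ∃ x ∈ K, h x < r)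
    (hgt : ∃ x ∈ K, r < h x) (hp : ∀ x ∈ K, h x = r → g x ≤ 0 → p ≤ f x) :
    ∃ t l : ℝ, 0 ≤ l ∧ ∀ x ∈ K, p ≤ f x + l * g x + t * (h x - r) := by
  obtain ⟨x₀, hx₀, hhx₀, hgx₀⟩ := hslater
  have hconv : Convex ℝ (K ∩ {x | h x = r}) :=
    hf.1.inter ((convex_singleton r).linear_preimage h)
  obtain ⟨l, hl, hpl⟩ := exists_multiplier_of_convexOn_le (hf.subset Set.inter_subset_left hconv)
    (hg.subset Set.inter_subset_left hconv) ⟨x₀, ⟨hx₀, hhx₀⟩, hgx₀⟩ fun x hx ↦ hp x hx.1 hx.2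
  obtain ⟨t, ht⟩ := exists_multiplier_of_linear_eq (hf.add (hg.smul hl)) h hlt hgt
    fun x hx hhx ↦ hpl x ⟨hx, hhx⟩
  exact ⟨t, l, hl, ht⟩

end LagrangeMultipliers

section PosSemidef

lemma convex_setOf_posSemidef {ι : Type*} : Convex ℝ {X : Matrix ι ι ℝ | X.PosSemidef} :=
  fun _ hX _ hY _ _ hα hβ _ ↦ (hX.smul hα).add (hY.smul hβ)

open scoped ComplexOrder MatrixOrder in
lemma trace_mul_nonneg_of_posSemidef {ι 𝕜 : Type*} [Fintype ι] [RCLike 𝕜] {S X : Matrix ι ι 𝕜}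
    (hS : S.PosSemidef) (hX : X.PosSemidef) : 0 ≤ (S * X).trace := by
  classical
  obtain ⟨B, rfl⟩ := CStarAlgebra.nonneg_iff_eq_star_mul_self.mp hS.nonneg
  rw [star_eq_conjTranspose, Matrix.mul_assoc, Matrix.trace_mul_comm]
  exact (hX.mul_mul_conjTranspose_same B).trace_nonneg

lemma posSemidef_vecMulVec_self {ι : Type*} [Finite ι] (v : ι → ℝ) :
    (vecMulVec v v).PosSemidef := by
  simpa using posSemidef_vecMulVec_self_star v

lemma isClosed_setOf_posSemidef {ι : Type*} [Finite ι] :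
    IsClosed {X : Matrix ι ι ℝ | X.PosSemidef} := by
  have := Fintype.ofFinite ι
  simp only [posSemidef_iff_dotProduct_mulVec, IsHermitian, Set.ofPred_and, Set.ofPred_forall]
  exact (isClosed_eq (by fun_prop) (by fun_prop)).inter
    (isClosed_iInter fun v ↦ isClosed_le (by fun_prop) (by fun_prop))

variable {ι : Type*} [Fintype ι]

lemma trace_mul_vecMulVec_self {R : Type*} [CommSemiring R] (M : Matrix ι ι R) (v : ι → R) :
    (M * vecMulVec v v).trace = v ⬝ᵥ M *ᵥ v := by
  rw [mul_vecMulVec, trace_vecMulVec, dotProduct_comm]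

lemma dotProduct_of_unique {R : Type*} [Mul R] [AddCommMonoid R] [Unique ι] (v w : ι → R) :
    v ⬝ᵥ w = v default * w default :=
  Fintype.sum_unique _

lemma abs_apply_le_trace_of_posSemidef {X : Matrix ι ι ℝ} (hX : X.PosSemidef) (i j : ι) :
    |X i j| ≤ X.trace := by
  classical
  have hdiag (k : ι) : X k k ≤ X.trace :=
    Finset.single_le_sum (f := X.diag) (fun k _ ↦ hX.diag_nonneg) (Finset.mem_univ k)
  have hsymm : X j i = X i j := by simpa using hX.isHermitian.apply i j
  have hadd := hX.dotProduct_mulVec_nonneg (Pi.single i 1 + Pi.single j 1)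
  have hsub := hX.dotProduct_mulVec_nonneg (Pi.single i 1 - Pi.single j 1)
  simp only [star_trivial, mulVec_add, mulVec_sub, mulVec_single, MulOpposite.op_one, one_smul,
    dotProduct_add, dotProduct_sub, add_dotProduct, sub_dotProduct, single_dotProduct, col_apply,
    one_mul] at hadd hsub
  rw [abs_le]
  constructor <;> linarith [hdiag i, hdiag j]

lemma isCompact_setOf_posSemidef_trace_le (r : ℝ) :
    IsCompact {X : Matrix ι ι ℝ | X.PosSemidef ∧ X.trace ≤ r} := by
  have hbox : IsCompact (Set.Icc (α := ι → ι → ℝ) (fun _ _ ↦ -r) (fun _ _ ↦ r)) := isCompact_Icc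
  refine hbox.of_isClosed_subset (isClosed_setOf_posSemidef.inter
    (isClosed_le continuous_id.matrix_trace continuous_const)) ?_
  rintro X ⟨hX, htr⟩
  have hentry (i j : ι) := abs_le.1 ((abs_apply_le_trace_of_posSemidef hX i j).trans htr)
  exact ⟨fun i j ↦ (hentry i j).1, fun i j ↦ (hentry i j).2⟩

/-- The spectraplex of trace `r`: the positive semidefinite matrices of trace `r`. Minimising a
linear functional over it is a smallest-eigenvalue problem. -/
def spectraplex (ι : Type*) [Fintype ι] (r : ℝ) : Set (Matrix ι ι ℝ) :=
  {X | X.PosSemidef ∧ X.trace = r}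

lemma convex_spectraplex (r : ℝ) : Convex ℝ (spectraplex ι r) :=
  convex_setOf_posSemidef.inter ((convex_singleton r).linear_preimage (traceLinearMap ι ℝ ℝ))

lemma exists_lagrange_multipliers_trace {K : Set (Matrix ι ι ℝ)} (hK : Convex ℝ K)
    (M₀ M₁ M₂ : Matrix ι ι ℝ) {p c r : ℝ}
    (hslater : ∃ X ∈ K, (M₂ * X).trace = r ∧ (M₁ * X).trace < c)
    (hlt : ∃ X ∈ K, (M₂ * X).trace < r) (hgt : ∃ X ∈ K, r < (M₂ * X).trace)
    (hp : ∀ X ∈ K, (M₂ * X).trace = r → (M₁ * X).trace ≤ c → p ≤ (M₀ * X).trace) :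
    ∃ t l : ℝ, 0 ≤ l ∧ ∀ X ∈ K,
      p ≤ (M₀ * X).trace + l * ((M₁ * X).trace - c) + t * ((M₂ * X).trace - r) := by
  classical
  let pairing (M : Matrix ι ι ℝ) := traceLinearMap ι ℝ ℝ ∘ₗ LinearMap.mulLeft ℝ M
  exact exists_lagrange_multipliers_s7 ((pairing M₀).convexOn hK)
    (((pairing M₁).convexOn hK).sub (concaveOn_const c hK)) (pairing M₂)
    (by simpa [pairing] using hslater) hlt hgt (by simpa [pairing] using hp)

end PosSemidef

section LambdaMin

variable {ι : Type} [Fintype ι] {M : Matrix ι ι ℝ}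

lemma mem_spectrum_iff_exists_mulVec_eq_smul {ι R : Type*} [Fintype ι] [DecidableEq ι] [Field R]
    {M : Matrix ι ι R} {μ : R} :
    μ ∈ spectrum R M ↔ ∃ v : ι → R, v ≠ 0 ∧ M *ᵥ v = μ • v := by
  rw [← spectrum_toLin', ← Module.End.hasEigenvalue_iff_mem_spectrum,
    Module.End.hasEigenvalue_iff, Submodule.ne_bot_iff]
  simp only [Module.End.mem_eigenspace_iff, toLin'_apply, and_comm]

lemma lambdaMin_eq_sInf_spectrum [DecidableEq ι] (M : Matrix ι ι ℝ) :
    lambdaMin M = sInf (spectrum ℝ M) := by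
  simp only [lambdaMin, ← mem_spectrum_iff_exists_mulVec_eq_smul, Set.ofPred_mem_eq]

lemma lambdaMin_mem_spectrum [DecidableEq ι] [Nonempty ι] (hM : M.IsHermitian) :
    lambdaMin M ∈ spectrum ℝ M := by
  rw [lambdaMin_eq_sInf_spectrum]
  exact Set.Nonempty.csInf_mem ⟨_, hM.eigenvalues_mem_spectrum_real (Classical.arbitrary ι)⟩
    M.finite_real_spectrum

lemma posSemidef_sub_lambdaMin [DecidableEq ι] (hM : M.IsHermitian) :
    (M - algebraMap ℝ _ (lambdaMin M)).PosSemidef := by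
  rw [posSemidef_iff_isHermitian_and_spectrum_nonneg, ← spectrum.sub_singleton_eq,
    lambdaMin_eq_sInf_spectrum]
  refine ⟨hM.sub ?_, ?_⟩
  · rw [algebraMap_eq_diagonal]
    exact isHermitian_diagonal _
  · rintro _ ⟨μ, hμ, _, rfl, rfl⟩
    exact sub_nonneg.2 (csInf_le M.finite_real_spectrum.bddBelow hμ)

lemma lambdaMin_mul_trace_le (hM : M.IsHermitian) {X : Matrix ι ι ℝ} (hX : X.PosSemidef) :
    lambdaMin M * X.trace ≤ (M * X).trace := by
  classical
  have h := trace_mul_nonneg_of_posSemidef (posSemidef_sub_lambdaMin hM) hX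
  rwa [Algebra.algebraMap_eq_smul_one, Matrix.sub_mul, trace_sub, smul_mul, Matrix.one_mul,
    trace_smul, smul_eq_mul, sub_nonneg] at h

lemma le_mul_lambdaMin [Nonempty ι] (hM : M.IsHermitian) {r q : ℝ} (hr : 0 ≤ r)
    (hq : ∀ X ∈ spectraplex ι r, q ≤ (M * X).trace) :
    q ≤ r * lambdaMin M := by
  classical
  obtain ⟨v, hv, hMv⟩ := mem_spectrum_iff_exists_mulVec_eq_smul.1 (lambdaMin_mem_spectrum hM)
  have hvv : v ⬝ᵥ v ≠ 0 := mt dotProduct_self_eq_zero.1 hv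
  have hvv₀ : 0 ≤ v ⬝ᵥ v := by simpa using dotProduct_self_star_nonneg v
  calc q ≤ (M * ((r / (v ⬝ᵥ v)) • vecMulVec v v)).trace :=
        hq _ ⟨(posSemidef_vecMulVec_self v).smul (div_nonneg hr hvv₀),
          by rw [trace_smul, trace_vecMulVec, smul_eq_mul, div_mul_cancel₀ _ hvv]⟩
    _ = r / (v ⬝ᵥ v) * (lambdaMin M * (v ⬝ᵥ v)) := by
        rw [Matrix.mul_smul, trace_smul, trace_mul_vecMulVec_self, hMv, dotProduct_smul,
          smul_eq_mul, smul_eq_mul]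
    _ = r * lambdaMin M := by field_simp

end LambdaMin

section Homogenization

/-- The homogenization `(s, x)` of a vector `x`, with the extra coordinate first as in `borderD`. -/
def homVec {ι : Type*} (s : ℝ) (x : ι → ℝ) : Unit ⊕ ι → ℝ := Sum.elim (fun _ ↦ s) x

/-- The rank-one matrix `(s, x)(s, x)ᵀ`. For `s = 1` it is the point of the SDO relaxation that
represents `x`. -/
def rankOneLift {ι : Type*} (s : ℝ) (x : ι → ℝ) : Matrix (Unit ⊕ ι) (Unit ⊕ ι) ℝ :=
  vecMulVec (homVec s x) (homVec s x)

lemma posSemidef_rankOneLift {ι : Type*} [Finite ι] (s : ℝ) (x : ι → ℝ) :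
    (rankOneLift s x).PosSemidef :=
  posSemidef_vecMulVec_self _

lemma trace_rankOneLift {ι : Type*} [Fintype ι] (s : ℝ) (x : ι → ℝ) :
    (rankOneLift s x).trace = x ⬝ᵥ x + s ^ 2 := by
  rw [rankOneLift, trace_vecMulVec, homVec, sumElim_dotProduct_sumElim, dotProduct_of_unique]
  ring

lemma rankOneLift_eq_smul {ι : Type*} {s : ℝ} (hs : s ≠ 0) (x : ι → ℝ) :
    rankOneLift s x = s ^ 2 • rankOneLift 1 (s⁻¹ • x) := by
  have hvec : homVec s x = s • homVec 1 (s⁻¹ • x) := by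
    ext (i | i) <;> simp [homVec, hs]
  rw [rankOneLift, hvec, smul_vecMulVec, vecMulVec_smul, smul_smul, ← sq, rankOneLift]

lemma posSemidef_of_forall_trace_mul_rankOneLift_nonneg {ι : Type*} [Fintype ι]
    {M : Matrix (Unit ⊕ ι) (Unit ⊕ ι) ℝ} (hM : M.IsHermitian)
    (h : ∀ x : ι → ℝ, 0 ≤ (M * rankOneLift 1 x).trace) : M.PosSemidef := by
  have hne (s : ℝ) (hs : s ≠ 0) (x : ι → ℝ) : 0 ≤ (M * rankOneLift s x).trace := by
    rw [rankOneLift_eq_smul hs, Matrix.mul_smul, trace_smul, smul_eq_mul]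
    exact mul_nonneg (sq_nonneg s) (h _)
  have hall (s : ℝ) (x : ι → ℝ) : 0 ≤ (M * rankOneLift s x).trace := by
    have hcont : Continuous fun s : ℝ ↦ homVec s x :=
      continuous_pi (Sum.rec (fun _ ↦ continuous_id) fun _ ↦ continuous_const)
    refine (dense_compl_singleton (0 : ℝ)).induction (fun s hs ↦ hne s hs x)
      (isClosed_le continuous_const ?_) s
    exact (continuous_const.matrix_mul (hcont.matrix_vecMulVec hcont)).matrix_trace
  refine .of_dotProduct_mulVec_nonneg hM fun y ↦ ?_
  have hy : homVec (y (Sum.inl ())) (y ∘ Sum.inr) = y := Sum.elim_comp_inl_inr y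
  rw [star_trivial, ← hy, ← trace_mul_vecMulVec_self]
  exact hall _ _

end Homogenization

section BorderedMatrices

variable {n : ℕ}

lemma isHermitian_borderD {A : Matrix (Fin n) (Fin n) ℝ} (hA : A.IsHermitian) (a : Fin n → ℝ)
    (t : ℝ) : (borderD A a t).IsHermitian :=
  .fromBlocks (by ext; simp) (by ext; simp) hA

lemma isHermitian_borderD2 {A : Matrix (Fin n) (Fin n) ℝ} (hA : A.IsHermitian) (a b : Fin n → ℝ)
    (t l : ℝ) : (borderD2 A a b t l).IsHermitian :=
  isHermitian_borderD hA _ _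

lemma isHermitian_sdoM1 : (sdoM1 n).IsHermitian :=
  .fromBlocks isHermitian_zero (by simp) isHermitian_one

lemma borderD2_eq_add (A : Matrix (Fin n) (Fin n) ℝ) (a b : Fin n → ℝ) (t l : ℝ) :
    borderD2 A a b t l = borderD A a 0 + l • sdoM2 b + t • sdoM3 n := by
  ext (i | i) (j | j) <;>
    simp only [borderD2, borderD, sdoM2, sdoM3, fromBlocks_apply₁₁, fromBlocks_apply₁₂,
      fromBlocks_apply₂₁, fromBlocks_apply₂₂, of_apply, Matrix.add_apply, Matrix.smul_apply,
      Matrix.zero_apply, one_apply_eq, smul_eq_mul] <;>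
    ring

lemma sdoM1_add_sdoM3 : sdoM1 n + sdoM3 n = 1 := by
  simp [sdoM1, sdoM3, fromBlocks_add]

lemma trace_borderD2_mul (A : Matrix (Fin n) (Fin n) ℝ) (a b : Fin n → ℝ) (t l : ℝ)
    (X : Matrix (Unit ⊕ Fin n) (Unit ⊕ Fin n) ℝ) :
    (borderD2 A a b t l * X).trace =
      (borderD A a 0 * X).trace + l * (sdoM2 b * X).trace + t * (sdoM3 n * X).trace := by
  simp only [borderD2_eq_add, Matrix.add_mul, smul_mul, trace_add, trace_smul, smul_eq_mul]

lemma trace_sdoM1_mul_add_trace_sdoM3_mul (X : Matrix (Unit ⊕ Fin n) (Unit ⊕ Fin n) ℝ) :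
    (sdoM1 n * X).trace + (sdoM3 n * X).trace = X.trace := by
  rw [← trace_add, ← Matrix.add_mul, sdoM1_add_sdoM3, Matrix.one_mul]

lemma trace_borderD_mul_rankOneLift (A : Matrix (Fin n) (Fin n) ℝ) (a : Fin n → ℝ) (t s : ℝ)
    (x : Fin n → ℝ) :
    (borderD A a t * rankOneLift s x).trace = t * s ^ 2 - 2 * s * (a ⬝ᵥ x) + x ⬝ᵥ A *ᵥ x := by
  have htop : (of fun (_ : Unit) j ↦ -a j) *ᵥ x = fun _ ↦ -(a ⬝ᵥ x) := by
    ext; simp [mulVec, dotProduct]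
  have hleft : (of fun i (_ : Unit) ↦ -a i) *ᵥ (fun _ ↦ s) = -s • a := by
    ext; simp [mulVec, dotProduct, mul_comm]
  have hcorner : (of fun (_ _ : Unit) ↦ t) *ᵥ (fun _ ↦ s) = fun _ ↦ t * s := by
    ext; simp [mulVec, dotProduct]
  rw [rankOneLift, trace_mul_vecMulVec_self, homVec, borderD, fromBlocks_mulVec,
    Sum.elim_comp_inl, Sum.elim_comp_inr, htop, hleft, hcorner, sumElim_dotProduct_sumElim,
    dotProduct_add, dotProduct_add, dotProduct_smul, smul_eq_mul, dotProduct_comm x a,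
    dotProduct_of_unique, dotProduct_of_unique]
  ring

lemma trace_sdoM1_mul_rankOneLift (s : ℝ) (x : Fin n → ℝ) :
    (sdoM1 n * rankOneLift s x).trace = x ⬝ᵥ x := by
  simp [rankOneLift, trace_mul_vecMulVec_self, homVec, sdoM1, fromBlocks_mulVec]

lemma trace_sdoM3_mul_rankOneLift (s : ℝ) (x : Fin n → ℝ) :
    (sdoM3 n * rankOneLift s x).trace = s ^ 2 := by
  simp [rankOneLift, trace_mul_vecMulVec_self, homVec, sdoM3, fromBlocks_mulVec, dotProduct, sq]

lemma sdoM2_eq_borderD (b : Fin n → ℝ) : sdoM2 b = borderD 0 (-(2⁻¹ : ℝ) • b) 0 := by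
  ext (i | i) (j | j) <;> simp [sdoM2, borderD, div_eq_inv_mul]

lemma trace_sdoM2_mul_rankOneLift (b : Fin n → ℝ) (s : ℝ) (x : Fin n → ℝ) :
    (sdoM2 b * rankOneLift s x).trace = s * (b ⬝ᵥ x) := by
  rw [sdoM2_eq_borderD, trace_borderD_mul_rankOneLift, smul_dotProduct, zero_mulVec,
    dotProduct_zero, smul_eq_mul]
  ring

lemma lagr_eq_trace_borderD2_mul (A : Matrix (Fin n) (Fin n) ℝ) (a b : Fin n → ℝ)
    (c Δ t l1 l2 : ℝ) (x : Fin n → ℝ) :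
    lagr A a b c Δ x l1 l2 =
      (borderD2 A a b t l2 * rankOneLift 1 x).trace - t + l1 * (x ⬝ᵥ x - Δ) - l2 * c := by
  rw [trace_borderD2_mul, trace_borderD_mul_rankOneLift, trace_sdoM2_mul_rankOneLift,
    trace_sdoM3_mul_rankOneLift, lagr, objQ]
  ring

lemma lambdaMin_borderD_nonpos {A : Matrix (Fin n) (Fin n) ℝ} (hA : A.IsHermitian)
    (hnpd : ¬A.PosDef) (a : Fin n → ℝ) (t : ℝ) : lambdaMin (borderD A a t) ≤ 0 := by
  obtain ⟨e, he, hAe⟩ : ∃ e : Fin n → ℝ, e ≠ 0 ∧ e ⬝ᵥ A *ᵥ e ≤ 0 := by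
    by_contra! h
    exact hnpd (.of_dotProduct_mulVec_pos hA h)
  have hle := lambdaMin_mul_trace_le (isHermitian_borderD hA a t) (posSemidef_rankOneLift 0 e)
  rw [trace_rankOneLift, trace_borderD_mul_rankOneLift] at hle
  have hpos : 0 < e ⬝ᵥ e := by simpa using dotProduct_self_star_pos_iff.2 he
  exact nonpos_of_mul_nonpos_left (by linarith) hpos

end BorderedMatrices

section Duality

variable {n : ℕ} {A : Matrix (Fin n) (Fin n) ℝ} {a b : Fin n → ℝ} {c Δ : ℝ}

/-- The set of values whose supremum is `dstar`: the lower bounds of the Lagrangians of eTRS with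
admissible multipliers. -/
def lagrangianLowerBounds (A : Matrix (Fin n) (Fin n) ℝ) (a b : Fin n → ℝ) (c Δ : ℝ) : Set ℝ :=
  {v | ∃ l1 l2 : ℝ, 0 ≤ l1 ∧ 0 ≤ l2 ∧ ∀ x : Fin n → ℝ, v ≤ lagr A a b c Δ x l1 l2}

/-- The feasible set of the SDO relaxation of eTRS. -/
def sdoFeasible (b : Fin n → ℝ) (c Δ : ℝ) : Set (Matrix (Unit ⊕ Fin n) (Unit ⊕ Fin n) ℝ) :=
  {X | X.PosSemidef ∧ (sdoM1 n * X).trace ≤ Δ ∧ (sdoM2 b * X).trace ≤ c ∧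
    (sdoM3 n * X).trace = 1}

lemma ktl_mem_lagrangianLowerBounds (hA : A.IsHermitian) (hnpd : ¬A.PosDef) (t : ℝ) {l : ℝ}
    (hl : 0 ≤ l) : ktl A a b c Δ t l ∈ lagrangianLowerBounds A a b c Δ := by
  refine ⟨-lambdaMin (borderD2 A a b t l), l,
    neg_nonneg.2 (lambdaMin_borderD_nonpos hA hnpd _ t), hl, fun x ↦ ?_⟩
  have hle := lambdaMin_mul_trace_le (isHermitian_borderD2 hA a b t l) (posSemidef_rankOneLift 1 x)
  rw [trace_rankOneLift] at hle
  rw [lagr_eq_trace_borderD2_mul (t := t), ktl]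
  linarith

lemma le_trace_of_mem_lagrangianLowerBounds (hA : A.IsHermitian) {v : ℝ}
    (hv : v ∈ lagrangianLowerBounds A a b c Δ) {X : Matrix (Unit ⊕ Fin n) (Unit ⊕ Fin n) ℝ}
    (hX : X ∈ sdoFeasible b c Δ) : v ≤ (borderD A a 0 * X).trace := by
  obtain ⟨l1, l2, hl1, hl2, hlagr⟩ := hv
  obtain ⟨hpsd, hX1, hX2, hX3⟩ := hX
  -- With this corner entry, `rankOneLift 1 x` pairs with the slack matrix below to
  -- `lagr A a b c Δ x l1 l2 - v`.
  set τ := -v - l1 * Δ - l2 * c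
  have htrace (Y : Matrix (Unit ⊕ Fin n) (Unit ⊕ Fin n) ℝ) :
      ((borderD2 A a b τ l2 + l1 • sdoM1 n) * Y).trace =
        (borderD2 A a b τ l2 * Y).trace + l1 * (sdoM1 n * Y).trace := by
    rw [Matrix.add_mul, smul_mul, trace_add, trace_smul, smul_eq_mul]
  have hslack : (borderD2 A a b τ l2 + l1 • sdoM1 n).PosSemidef := by
    refine posSemidef_of_forall_trace_mul_rankOneLift_nonneg
      ((isHermitian_borderD2 hA a b τ l2).add (isHermitian_sdoM1.smul (.all l1))) fun x ↦ ?_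
    have hx := hlagr x
    rw [lagr_eq_trace_borderD2_mul (t := τ)] at hx
    rw [htrace, trace_sdoM1_mul_rankOneLift]
    linarith
  have hnonneg := trace_mul_nonneg_of_posSemidef hslack hpsd
  rw [htrace, trace_borderD2_mul, hX3] at hnonneg
  linarith [mul_le_mul_of_nonneg_left hX1 hl1, mul_le_mul_of_nonneg_left hX2 hl2]

lemma drstar_eq_of_isMinOn {X : Matrix (Unit ⊕ Fin n) (Unit ⊕ Fin n) ℝ}
    (hX : X ∈ sdoFeasible b c Δ)
    (hmin : IsMinOn (fun Y ↦ (borderD A a 0 * Y).trace) (sdoFeasible b c Δ) X) :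
    drstar A a b c Δ = (borderD A a 0 * X).trace := by
  obtain ⟨hpsd, hX1, hX2, hX3⟩ := hX
  refine IsLeast.csInf_eq ⟨⟨X, hpsd, hX1, hX2, hX3, rfl⟩, ?_⟩
  rintro _ ⟨Y, hY, hY1, hY2, hY3, rfl⟩
  exact hmin ⟨hY, hY1, hY2, hY3⟩

lemma rankOneLift_mem_sdoFeasible {x : Fin n → ℝ} (hxΔ : x ⬝ᵥ x ≤ Δ) (hxc : b ⬝ᵥ x ≤ c) :
    rankOneLift 1 x ∈ sdoFeasible b c Δ :=
  ⟨posSemidef_rankOneLift 1 x, by rwa [trace_sdoM1_mul_rankOneLift],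
    by rwa [trace_sdoM2_mul_rankOneLift, one_mul], by rw [trace_sdoM3_mul_rankOneLift, one_pow]⟩

lemma isCompact_sdoFeasible (b : Fin n → ℝ) (c Δ : ℝ) : IsCompact (sdoFeasible b c Δ) := by
  have hcont (M : Matrix (Unit ⊕ Fin n) (Unit ⊕ Fin n) ℝ) : Continuous fun X ↦ (M * X).trace :=
    (continuous_const.matrix_mul continuous_id).matrix_trace
  refine (isCompact_setOf_posSemidef_trace_le (Δ + 1)).of_isClosed_subset ?_ ?_
  · exact isClosed_setOf_posSemidef.inter <| (isClosed_le (hcont _) continuous_const).inter <|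
      (isClosed_le (hcont _) continuous_const).inter (isClosed_eq (hcont _) continuous_const)
  · rintro X ⟨hX, hX1, -, hX3⟩
    refine ⟨hX, ?_⟩
    rw [← trace_sdoM1_mul_add_trace_sdoM3_mul, hX3]
    linarith

lemma exists_mem_spectraplex [NeZero n] {s r : ℝ} {x : Fin n → ℝ} (hr : x ⬝ᵥ x + s ^ 2 ≤ r) :
    ∃ X ∈ spectraplex (Unit ⊕ Fin n) r, (sdoM3 n * X).trace = s ^ 2 ∧
      ∀ b : Fin n → ℝ, (sdoM2 b * X).trace = s * (b ⬝ᵥ x) := by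
  let e : Fin n → ℝ := Pi.single 0 1
  have he : e ⬝ᵥ e = 1 := by simp [e]
  -- `rankOneLift 0 e` fills up the trace and is orthogonal to `sdoM2 b` and `sdoM3 n`.
  refine ⟨rankOneLift s x + (r - (x ⬝ᵥ x + s ^ 2)) • rankOneLift 0 e,
    ⟨(posSemidef_rankOneLift s x).add ((posSemidef_rankOneLift 0 e).smul (sub_nonneg.2 hr)), ?_⟩,
    ?_, fun b ↦ ?_⟩
  · simp [trace_rankOneLift, he]
  · simp [mul_add, trace_sdoM3_mul_rankOneLift]
  · simp [mul_add, trace_sdoM2_mul_rankOneLift]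

lemma exists_sdo_multipliers [NeZero n] (A : Matrix (Fin n) (Fin n) ℝ) (hΔ : 0 < Δ)
    (hslater : ∃ x : Fin n → ℝ, x ⬝ᵥ x < Δ ∧ b ⬝ᵥ x < c) {p : ℝ}
    (hp : ∀ X ∈ sdoFeasible b c Δ, p ≤ (borderD A a 0 * X).trace) :
    ∃ t l : ℝ, 0 ≤ l ∧ ∀ X ∈ spectraplex (Unit ⊕ Fin n) (Δ + 1),
      p ≤ (borderD2 A a b t l * X).trace - t - l * c := by
  have hslater' : ∃ X ∈ spectraplex (Unit ⊕ Fin n) (Δ + 1),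
      (sdoM3 n * X).trace = 1 ∧ (sdoM2 b * X).trace < c := by
    obtain ⟨x, hxΔ, hxc⟩ := hslater
    obtain ⟨X, hX, hX3, hX2⟩ := exists_mem_spectraplex (by linarith : x ⬝ᵥ x + 1 ^ 2 ≤ Δ + 1)
    exact ⟨X, hX, by rw [hX3, one_pow], by rwa [hX2, one_mul]⟩
  have hlt : ∃ X ∈ spectraplex (Unit ⊕ Fin n) (Δ + 1), (sdoM3 n * X).trace < 1 := by
    obtain ⟨X, hX, hX3, -⟩ := exists_mem_spectraplex (n := n) (s := 0) (r := Δ + 1) (x := 0)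
      (by rw [zero_dotProduct]; linarith)
    exact ⟨X, hX, by norm_num [hX3]⟩
  have hgt : ∃ X ∈ spectraplex (Unit ⊕ Fin n) (Δ + 1), 1 < (sdoM3 n * X).trace := by
    have hsq : √(Δ + 1) ^ 2 = Δ + 1 := Real.sq_sqrt (by linarith)
    obtain ⟨X, hX, hX3, -⟩ := exists_mem_spectraplex (n := n) (s := √(Δ + 1)) (r := Δ + 1) (x := 0)
      (by rw [hsq, zero_dotProduct, zero_add])
    exact ⟨X, hX, by linarith⟩
  obtain ⟨t, l, hl, hle⟩ := exists_lagrange_multipliers_trace (convex_spectraplex (Δ + 1))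
    (borderD A a 0) (sdoM2 b) (sdoM3 n) hslater' hlt hgt fun X hX hX3 hX2 ↦ by
      have hsum := trace_sdoM1_mul_add_trace_sdoM3_mul X
      exact hp X ⟨hX.1, by linarith [hX.2], hX2, hX3⟩
  refine ⟨t, l, hl, fun X hX ↦ (hle X hX).trans_eq ?_⟩
  rw [trace_borderD2_mul]
  ring

lemma exists_le_ktl [NeZero n] (hA : A.IsHermitian) (hΔ : 0 < Δ)
    (hslater : ∃ x : Fin n → ℝ, x ⬝ᵥ x < Δ ∧ b ⬝ᵥ x < c) {p : ℝ}
    (hp : ∀ X ∈ sdoFeasible b c Δ, p ≤ (borderD A a 0 * X).trace) :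
    ∃ t l : ℝ, 0 ≤ l ∧ p ≤ ktl A a b c Δ t l := by
  obtain ⟨t, l, hl, hle⟩ := exists_sdo_multipliers A hΔ hslater hp
  have hmin : p + t + l * c ≤ (Δ + 1) * lambdaMin (borderD2 A a b t l) :=
    le_mul_lambdaMin (isHermitian_borderD2 hA a b t l) (by linarith) fun X hX ↦ by
      linarith [hle X hX]
  exact ⟨t, l, hl, by rw [ktl]; linarith⟩

end Duality

/-- Tightness of the eigenvalue dual with respect to the SDO relaxation,
with attainment of both optimal values. -/
theorem stmt7 {n : ℕ} (hn : 1 ≤ n) (A : Matrix (Fin n) (Fin n) ℝ) (hA : A.IsHermitian)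
    (hnpd : ¬ A.PosDef) (a b : Fin n → ℝ) (c Δ : ℝ) (hΔ : 0 < Δ)
    (hslater : ∃ x : Fin n → ℝ, x ⬝ᵥ x < Δ ∧ b ⬝ᵥ x < c) :
    dstar A a b c Δ = drstar A a b c Δ ∧
    (∃ t l : ℝ, 0 ≤ l ∧ ktl A a b c Δ t l = dstar A a b c Δ ∧
      ∀ t' l' : ℝ, 0 ≤ l' → ktl A a b c Δ t' l' ≤ ktl A a b c Δ t l) ∧
    (∃ X : Matrix (Unit ⊕ Fin n) (Unit ⊕ Fin n) ℝ, X.PosSemidef ∧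
      (sdoM1 n * X).trace ≤ Δ ∧ (sdoM2 b * X).trace ≤ c ∧
      (sdoM3 n * X).trace = 1 ∧ (borderD A a 0 * X).trace = drstar A a b c Δ) := by
  have : NeZero n := ⟨by lia⟩
  have ⟨x₀, hx₀Δ, hx₀c⟩ := hslater
  obtain ⟨X, hX, hXmin⟩ := (isCompact_sdoFeasible b c Δ).exists_isMinOn
    ⟨_, rankOneLift_mem_sdoFeasible hx₀Δ.le hx₀c.le⟩
    (continuous_const.matrix_mul continuous_id).matrix_trace.continuousOn
  obtain ⟨t, l, hl, hXk⟩ := exists_le_ktl hA hΔ hslater hXmin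
  have hk : IsGreatest (lagrangianLowerBounds A a b c Δ) (ktl A a b c Δ t l) :=
    ⟨ktl_mem_lagrangianLowerBounds hA hnpd t hl,
      fun v hv ↦ (le_trace_of_mem_lagrangianLowerBounds hA hv hX).trans hXk⟩
  have hdstar : dstar A a b c Δ = ktl A a b c Δ t l := hk.csSup_eq
  have hkX : ktl A a b c Δ t l = (borderD A a 0 * X).trace :=
    (le_trace_of_mem_lagrangianLowerBounds hA hk.1 hX).antisymm hXk
  have hdrstar := drstar_eq_of_isMinOn hX hXmin
  obtain ⟨hpsd, hX1, hX2, hX3⟩ := hX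
  exact ⟨by rw [hdstar, hkX, hdrstar],
    ⟨t, l, hl, hdstar.symm, fun t' l' hl' ↦ hk.2 (ktl_mem_lagrangianLowerBounds hA hnpd t' hl')⟩,
    X, hpsd, hX1, hX2, hX3, hdrstar.symm⟩
end
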